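/- For every prime p ≥ 5 and every k ≥ 1, if G is a finite simple graph such that for every j the number of independent sets of size j in G equals the number of independent sets of size j in the cycle C_{p^k}, then G is isomorphic to C_{p^k} or G is isomorphic to D_{p^k}. -/

import Mathlib

open SimpleGraph Polynomial Finset

/-- The number of independent sets of size `k` in the graph `G`. -/
noncomputable def indepCount {V : Type*} [Fintype V] (G : SimpleGraph V) (k : ℕ) : ℕ :=
  Nat.card {s : Finset V // s.card = k ∧ ∀ u ∈ s, ∀ v ∈ s, ¬ G.Adj u v}

/-- The graph `D_n`: a triangle on the vertices `0, 1, 2` together with the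
pendant path `2 - 3 - ⋯ - (n-1)`. -/
def dGraph (n : ℕ) : SimpleGraph (Fin n) :=
  SimpleGraph.fromRel (fun u v =>
    (u.val = 0 ∧ v.val = 1) ∨ (u.val = 0 ∧ v.val = 2) ∨ (u.val = 1 ∧ v.val = 2) ∨
    (2 ≤ u.val ∧ v.val = u.val + 1))

section

open scoped Classical

variable {V : Type*}

/-- The independent sets of `G` contained in `A`. -/
noncomputable def indepSets (G : SimpleGraph V) (A : Finset V) : Finset (Finset V) :=
  A.powerset.filter fun s => ∀ u ∈ s, ∀ v ∈ s, ¬ G.Adj u v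

/-- The independence polynomial of the subgraph of `G` induced on `A`. -/
noncomputable def indepPoly (G : SimpleGraph V) (A : Finset V) : ℤ[X] :=
  ∑ s ∈ indepSets G A, X ^ #s

/-- The vertices of `A` outside the closed neighbourhood of `v`. -/
noncomputable def nonNbrs (G : SimpleGraph V) (A : Finset V) (v : V) : Finset V :=
  A.filter fun w => w ≠ v ∧ ¬ G.Adj v w

lemma mem_indepSets {G : SimpleGraph V} {A s : Finset V} :
    s ∈ indepSets G A ↔ s ⊆ A ∧ ∀ u ∈ s, ∀ v ∈ s, ¬ G.Adj u v := by
  simp [indepSets]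

lemma mem_nonNbrs {G : SimpleGraph V} {A : Finset V} {v w : V} :
    w ∈ nonNbrs G A v ↔ w ∈ A ∧ w ≠ v ∧ ¬ G.Adj v w := by
  simp [nonNbrs]

lemma coeff_indepPoly (G : SimpleGraph V) (A : Finset V) (j : ℕ) :
    (indepPoly G A).coeff j = #{s ∈ indepSets G A | #s = j} := by
  simp [indepPoly, finsetSum_coeff, coeff_X_pow, Finset.sum_boole, eq_comm]

lemma coeff_indepPoly_univ [Fintype V] (G : SimpleGraph V) (j : ℕ) :
    (indepPoly G univ).coeff j = indepCount G j := by
  rw [coeff_indepPoly, indepCount, Nat.card_eq_fintype_card, Fintype.card_subtype]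
  congr 2
  ext s
  simp [mem_indepSets, and_comm]

lemma indepSets_empty (G : SimpleGraph V) : indepSets G ∅ = {∅} := by
  ext s
  simp only [mem_indepSets, subset_empty, mem_singleton]
  exact ⟨fun h => h.1, fun h => by simp [h]⟩

lemma indepPoly_empty (G : SimpleGraph V) : indepPoly G ∅ = 1 := by
  simp [indepPoly, indepSets_empty]

/-- Independent sets containing `v` correspond to independent sets avoiding the closed
neighbourhood of `v`. -/
lemma sum_indepSets_mem {M : Type*} [AddCommMonoid M] (G : SimpleGraph V) {A : Finset V} {v : V}
    (hv : v ∈ A) (f : Finset V → M) :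
    ∑ s ∈ indepSets G A with v ∈ s, f s = ∑ s ∈ indepSets G (nonNbrs G A v), f (insert v s) := by
  symm
  refine Finset.sum_bij' (fun s _ => insert v s) (fun s _ => s.erase v) ?_ ?_ ?_ ?_ ?_
  · intro s hs
    simp only [mem_indepSets, subset_iff, mem_nonNbrs, mem_filter, mem_insert] at hs ⊢
    obtain ⟨h1, h2⟩ := hs
    refine ⟨⟨?_, ?_⟩, Or.inl trivial⟩
    · rintro x (rfl | hx)
      exacts [hv, (h1 hx).1]
    · rintro x (rfl | hx) y (rfl | hy)
      · exact G.loopless.irrefl _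
      · exact (h1 hy).2.2
      · exact fun h => (h1 hx).2.2 h.symm
      · exact h2 x hx y hy
  · intro s hs
    simp only [mem_indepSets, subset_iff, mem_nonNbrs, mem_filter, mem_erase] at hs ⊢
    obtain ⟨⟨h1, h2⟩, h3⟩ := hs
    exact ⟨fun x hx => ⟨h1 hx.2, hx.1, h2 v h3 x hx.2⟩, fun x hx y hy => h2 x hx.2 y hy.2⟩
  · intro s hs
    refine erase_insert fun h => ?_
    exact (mem_nonNbrs.1 ((mem_indepSets.1 hs).1 h)).2.1 rfl
  · intro s hs
    exact insert_erase (mem_filter.1 hs).2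
  · intros
    rfl

lemma notMem_of_mem_indepSets_nonNbrs {G : SimpleGraph V} {A s : Finset V} {v : V}
    (hs : s ∈ indepSets G (nonNbrs G A v)) : v ∉ s := fun h =>
  (mem_nonNbrs.1 ((mem_indepSets.1 hs).1 h)).2.1 rfl

lemma indepPoly_delete (G : SimpleGraph V) {A : Finset V} {v : V} (hv : v ∈ A) :
    indepPoly G A = indepPoly G (A.erase v) + X * indepPoly G (nonNbrs G A v) := by
  rw [indepPoly, ← Finset.sum_filter_add_sum_filter_not _ (fun s => v ∈ s), add_comm,
    sum_indepSets_mem G hv, indepPoly, indepPoly, Finset.mul_sum]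
  congr 1
  · congr 1
    ext s
    simp only [mem_filter, mem_indepSets, subset_erase]
    tauto
  · refine Finset.sum_congr rfl fun s hs => ?_
    rw [card_insert_of_notMem (notMem_of_mem_indepSets_nonNbrs hs), pow_succ']

lemma succ_mul_coeff_indepPoly (G : SimpleGraph V) (A : Finset V) (j : ℕ) :
    (j + 1 : ℤ) * (indepPoly G A).coeff (j + 1) =
      ∑ v ∈ A, (indepPoly G (nonNbrs G A v)).coeff j := by
  have h : derivative (indepPoly G A) = ∑ v ∈ A, indepPoly G (nonNbrs G A v) := by
    have h1 : derivative (indepPoly G A) =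
        ∑ s ∈ indepSets G A, ∑ v ∈ A with v ∈ s, X ^ (#s - 1) := by
      rw [indepPoly, derivative_sum]
      refine Finset.sum_congr rfl fun s hs => ?_
      have : A.filter (fun v => v ∈ s) = s := by
        ext x
        simpa using fun hx => (mem_indepSets.1 hs).1 hx
      rw [this]
      simp [derivative_X_pow]
    rw [h1]
    simp_rw [Finset.sum_filter]
    rw [Finset.sum_comm]
    refine Finset.sum_congr rfl fun v hv => ?_
    rw [← Finset.sum_filter, sum_indepSets_mem G hv, indepPoly]
    refine Finset.sum_congr rfl fun s hs => ?_
    rw [card_insert_of_notMem (notMem_of_mem_indepSets_nonNbrs hs), Nat.add_sub_cancel]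
  rw [← finsetSum_coeff, ← h, coeff_derivative, mul_comm]

lemma indepPoly_union (G : SimpleGraph V) {A B : Finset V} (hAB : Disjoint A B)
    (h : ∀ a ∈ A, ∀ b ∈ B, ¬ G.Adj a b) :
    indepPoly G (A ∪ B) = indepPoly G A * indepPoly G B := by
  rw [indepPoly, indepPoly, indepPoly, Finset.sum_mul_sum, ← Finset.sum_product']
  refine Finset.sum_bij' (fun s _ => (s ∩ A, s ∩ B)) (fun q _ => q.1 ∪ q.2) ?_ ?_ ?_ ?_ ?_
  · intro s hs
    simp only [mem_product, mem_indepSets, mem_inter] at hs ⊢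
    exact ⟨⟨inter_subset_right, fun x hx y hy => hs.2 x hx.1 y hy.1⟩,
      ⟨inter_subset_right, fun x hx y hy => hs.2 x hx.1 y hy.1⟩⟩
  · rintro ⟨s, t⟩ hst
    simp only [mem_product, mem_indepSets, mem_union] at hst ⊢
    obtain ⟨⟨hs, hs'⟩, ht, ht'⟩ := hst
    refine ⟨union_subset_union hs ht, ?_⟩
    rintro x (hx | hx) y (hy | hy)
    · exact hs' x hx y hy
    · exact h x (hs hx) y (ht hy)
    · exact fun e => h y (hs hy) x (ht hx) e.symm
    · exact ht' x hx y hy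
  · intro s hs
    rw [← inter_union_distrib_left]
    exact inter_eq_left.2 (mem_indepSets.1 hs).1
  · rintro ⟨s, t⟩ hst
    simp only [mem_product, mem_indepSets] at hst
    have hs := hst.1.1
    have ht := hst.2.1
    rw [Finset.disjoint_left] at hAB
    simp only [Prod.mk.injEq]
    constructor
    · ext x
      simp only [mem_inter, mem_union]
      exact ⟨fun hx => hx.1.resolve_right fun h => hAB hx.2 (ht h), fun hx => ⟨.inl hx, hs hx⟩⟩
    · ext x
      simp only [mem_inter, mem_union]
      exact ⟨fun hx => hx.1.resolve_left fun h => hAB (hs h) hx.2, fun hx => ⟨.inr hx, ht hx⟩⟩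
  · intro s hs
    rw [← pow_add, ← card_union_of_disjoint, ← inter_union_distrib_left,
      inter_eq_left.2 (mem_indepSets.1 hs).1]
    exact hAB.mono inter_subset_right inter_subset_right

lemma coeff_zero_indepPoly (G : SimpleGraph V) (A : Finset V) : (indepPoly G A).coeff 0 = 1 := by
  rw [coeff_indepPoly]
  have : {s ∈ indepSets G A | #s = 0} = {∅} := by
    ext s
    simp only [mem_filter, mem_indepSets, card_eq_zero, mem_singleton]
    exact ⟨fun h => h.2, fun h => by simp [h]⟩
  rw [this, card_singleton, Nat.cast_one]

lemma coeff_one_indepPoly (G : SimpleGraph V) (A : Finset V) : (indepPoly G A).coeff 1 = #A := by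
  simpa [coeff_zero_indepPoly] using succ_mul_coeff_indepPoly G A 0

/-- The number of ordered pairs `(y, z)` such that `x, y, z` form a triangle. -/
noncomputable def triangleDegree [Fintype V] (G : SimpleGraph V) (x : V) : ℤ :=
  ∑ y, ∑ z, if G.Adj x y ∧ G.Adj x z ∧ G.Adj y z then 1 else 0

lemma sum_adj_eq_degree [Fintype V] (G : SimpleGraph V) {A : Finset V}
    (hA : ∀ x ∈ A, ∀ y, G.Adj x y → y ∈ A) {x : V} (hx : x ∈ A) :
    ∑ y ∈ A, (if G.Adj x y then (1 : ℤ) else 0) = G.degree x := by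
  rw [Finset.sum_boole, ← card_neighborFinset_eq_degree]
  congr 2
  ext y
  simpa using hA x hx y

lemma two_mul_coeff_two_indepPoly [Fintype V] (G : SimpleGraph V) {A : Finset V}
    (hA : ∀ x ∈ A, ∀ y, G.Adj x y → y ∈ A) :
    2 * (indepPoly G A).coeff 2 = (#A : ℤ) ^ 2 - #A - ∑ x ∈ A, (G.degree x : ℤ) := by
  have h := succ_mul_coeff_indepPoly G A 1
  simp only [coeff_one_indepPoly] at h
  have h2 : ∀ v ∈ A, (#(nonNbrs G A v) : ℤ) = #A - 1 - G.degree v := by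
    intro v hv
    rw [nonNbrs, ← Finset.sum_boole, ← sum_adj_eq_degree G hA hv]
    have h3 : ∀ w ∈ A, (if w ≠ v ∧ ¬ G.Adj v w then (1 : ℤ) else 0) =
        1 - (if v = w then 1 else 0) - (if G.Adj v w then 1 else 0) := by
      intro w _
      by_cases e : v = w
      · subst e
        simp
      · by_cases f : G.Adj v w <;> simp [e, f, Ne.symm e]
    rw [Finset.sum_congr rfl h3]
    simp [Finset.sum_sub_distrib, hv]
  rw [Finset.sum_congr rfl h2] at h
  simp only [Finset.sum_sub_distrib, Finset.sum_const, nsmul_eq_mul] at h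
  norm_num at h
  rw [h]
  ring

lemma six_mul_coeff_three_indepPoly [Fintype V] (G : SimpleGraph V) {A : Finset V}
    (hA : ∀ x ∈ A, ∀ y, G.Adj x y → y ∈ A) :
    6 * (indepPoly G A).coeff 3 = (#A : ℤ) ^ 3 - 3 * #A ^ 2 + 2 * #A
      - 3 * (#A - 1) * ∑ x ∈ A, (G.degree x : ℤ) + 3 * ∑ x ∈ A, (G.degree x : ℤ) ^ 2
      - ∑ x ∈ A, triangleDegree G x := by
  set a : V → V → ℤ := fun x y => if G.Adj x y then 1 else 0 with ha
  set e : V → V → ℤ := fun x y => if x = y then 1 else 0 with he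
  have h1 : ∀ B : Finset V, 2 * (indepPoly G B).coeff 2 =
      ∑ x ∈ B, ∑ y ∈ B, (1 - e x y - a x y) := by
    intro B
    have h := succ_mul_coeff_indepPoly G B 1
    norm_num [coeff_one_indepPoly] at h
    rw [h]
    refine Finset.sum_congr rfl fun x _ => ?_
    rw [nonNbrs, ← Finset.sum_boole]
    refine Finset.sum_congr rfl fun y _ => ?_
    by_cases h : x = y
    · subst h
      simp [ha, he]
    · by_cases f : G.Adj x y <;> simp [ha, he, h, f, Ne.symm h]
  have h2 : 6 * (indepPoly G A).coeff 3 = ∑ x ∈ A, ∑ y ∈ A, ∑ z ∈ A,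
      (1 - e x y - a x y) * ((1 - e x z - a x z) * (1 - e y z - a y z)) := by
    have h := succ_mul_coeff_indepPoly G A 2
    norm_num at h
    rw [show (6 : ℤ) = 2 * 3 by norm_num, mul_assoc, h, Finset.mul_sum]
    refine Finset.sum_congr rfl fun x _ => ?_
    rw [h1, nonNbrs, Finset.sum_filter]
    refine Finset.sum_congr rfl fun y _ => ?_
    have key : ∀ w, (if w ≠ x ∧ ¬ G.Adj x w then (1 : ℤ) else 0) = 1 - e x w - a x w := by
      intro w
      by_cases h : x = w
      · subst h
        simp [ha, he]
      · by_cases f : G.Adj x w <;> simp [ha, he, h, f, Ne.symm h]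
    rw [← Finset.mul_sum, ← key, ite_mul, one_mul, zero_mul, Finset.sum_filter]
    congr 1
    refine Finset.sum_congr rfl fun z _ => ?_
    rw [← key z, ite_mul, one_mul, zero_mul]
  have hT : ∑ x ∈ A, triangleDegree G x = ∑ x ∈ A, ∑ y ∈ A, ∑ z ∈ A, a x y * a x z * a y z := by
    refine Finset.sum_congr rfl fun x hx => ?_
    rw [triangleDegree, ← Finset.sum_subset (subset_univ A)]
    · refine Finset.sum_congr rfl fun y hy => ?_
      rw [← Finset.sum_subset (subset_univ A)]
      · refine Finset.sum_congr rfl fun z hz => ?_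
        by_cases h1 : G.Adj x y <;> by_cases h2 : G.Adj x z <;> by_cases h3 : G.Adj y z <;>
          simp [ha, h1, h2, h3]
      · intro z _ hz
        exact if_neg fun h => hz (hA x hx z h.2.1)
    · intro y _ hy
      exact Finset.sum_eq_zero fun z _ => if_neg fun h => hy (hA x hx y h.1)
  have ea : ∀ x y, e x y * a x y = 0 := by
    intro x y
    by_cases h : x = y
    · subst h
      simp [ha]
    · simp [he, h]
  have aa : ∀ x y, a x y * a x y = a x y := by
    intro x y
    by_cases h : G.Adj x y <;> simp [ha, h]
  have ac : ∀ x y, a x y = a y x := fun x y => by simp [ha, G.adj_comm]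
  have ec : ∀ x y, e x y = e y x := fun x y => by simp [he, eq_comm]
  have sa : ∀ x ∈ A, ∑ y ∈ A, a x y = G.degree x := fun x hx => sum_adj_eq_degree G hA hx
  have se : ∀ x ∈ A, ∀ f : V → ℤ, ∑ y ∈ A, e x y * f y = f x := by
    intro x hx f
    simp [he, hx]
  have se' : ∀ x ∈ A, ∑ y ∈ A, e x y = 1 := fun x hx => by simpa using se x hx 1
  rw [h2, hT]
  have inner : ∀ x ∈ A, ∀ y ∈ A, ∑ z ∈ A,
      (1 - e x y - a x y) * ((1 - e x z - a x z) * (1 - e y z - a y z)) =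
      (1 - e x y - a x y) * (#A - 2 - G.degree x - G.degree y)
        + ∑ z ∈ A, (1 - e x y) * (a x z * a y z) - ∑ z ∈ A, a x y * a x z * a y z := by
    intro x hx y hy
    have expand : ∀ z ∈ A, (1 - e x y - a x y) * ((1 - e x z - a x z) * (1 - e y z - a y z)) =
        (1 - e x y - a x y) * (1 - e x z - e y z - a x z - a y z + e x z * e y z
          + e x z * a y z + e y z * a x z) + ((1 - e x y) * (a x z * a y z)
          - a x y * a x z * a y z) := by
      intro z _
      ring
    rw [Finset.sum_congr rfl expand, Finset.sum_add_distrib, ← Finset.mul_sum,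
      Finset.sum_sub_distrib]
    simp only [Finset.sum_add_distrib, Finset.sum_sub_distrib, se x hx, se y hy, se' x hx,
      se' y hy, sa x hx, sa y hy,
      Finset.sum_const, nsmul_eq_mul, mul_one]
    have z1 : (1 - e x y - a x y) * e y x = 0 := by
      rw [ec y x]
      by_cases h : x = y
      · subst h
        simp [he, ha]
      · simp [he, h]
    have z2 : (1 - e x y - a x y) * a x y = 0 := by
      linear_combination -(ea x y) - aa x y
    have z3 : a y x = a x y := ac y x
    rw [z3]
    linear_combination z1 + 2 * z2
  have outer : ∀ x ∈ A, ∑ y ∈ A, ∑ z ∈ A,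
      (1 - e x y - a x y) * ((1 - e x z - a x z) * (1 - e y z - a y z)) =
      (#A - 1 - G.degree x : ℤ) * (#A - 2 - G.degree x) - ∑ y ∈ A, (G.degree y : ℤ)
        + G.degree x + ∑ y ∈ A, a x y * G.degree y
        + ∑ y ∈ A, a x y * G.degree y - G.degree x
        - ∑ y ∈ A, ∑ z ∈ A, a x y * a x z * a y z := by
    intro x hx
    rw [Finset.sum_congr rfl (inner x hx), Finset.sum_sub_distrib, Finset.sum_add_distrib]
    have t1 : ∑ y ∈ A, (1 - e x y - a x y) * (#A - 2 - G.degree x - G.degree y : ℤ) =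
        (#A - 1 - G.degree x : ℤ) * (#A - 2 - G.degree x) - ∑ y ∈ A, (G.degree y : ℤ)
        + G.degree x + ∑ y ∈ A, a x y * G.degree y := by
      have expand : ∀ y ∈ A, (1 - e x y - a x y) * (#A - 2 - G.degree x - G.degree y : ℤ) =
          (#A - 2 - G.degree x : ℤ) - G.degree y - e x y * (#A - 2 - G.degree x - G.degree y : ℤ)
          - a x y * (#A - 2 - G.degree x : ℤ) + a x y * G.degree y := by
        intro y _
        ring
      rw [Finset.sum_congr rfl expand]
      simp only [Finset.sum_add_distrib, Finset.sum_sub_distrib, se x hx,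
        ← Finset.sum_mul, sa x hx, Finset.sum_const, nsmul_eq_mul]
      ring
    have t2 : ∑ y ∈ A, ∑ z ∈ A, (1 - e x y) * (a x z * a y z) =
        ∑ y ∈ A, a x y * G.degree y - G.degree x := by
      have expand : ∀ y ∈ A, ∑ z ∈ A, (1 - e x y) * (a x z * a y z) =
          ∑ z ∈ A, a x z * a y z - e x y * ∑ z ∈ A, a x z * a y z := by
        intro y _
        rw [← Finset.mul_sum]
        ring
      rw [Finset.sum_congr rfl expand, Finset.sum_sub_distrib, se x hx, Finset.sum_comm]
      simp only [aa, sa x hx, ← Finset.mul_sum]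
      congr 1
      refine Finset.sum_congr rfl fun z hz => ?_
      simp_rw [ac _ z]
      rw [sa z hz]
    rw [t1, t2]
    ring
  have sd : ∑ x ∈ A, ∑ y ∈ A, a x y * G.degree y = ∑ x ∈ A, (G.degree x : ℤ) ^ 2 := by
    rw [Finset.sum_comm]
    refine Finset.sum_congr rfl fun y hy => ?_
    rw [← Finset.sum_mul]
    simp_rw [ac _ y]
    rw [sa y hy, sq]
  rw [Finset.sum_congr rfl outer]
  have expand : ∀ x ∈ A, (#A - 1 - G.degree x : ℤ) * (#A - 2 - G.degree x) =
      (#A - 1 : ℤ) * (#A - 2) - (2 * #A - 3) * G.degree x + (G.degree x : ℤ) ^ 2 := by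
    intro x _
    ring
  simp only [Finset.sum_add_distrib, Finset.sum_sub_distrib, sd]
  rw [Finset.sum_congr rfl expand]
  simp only [Finset.sum_add_distrib, Finset.sum_sub_distrib, Finset.sum_const, nsmul_eq_mul,
    ← Finset.mul_sum]
  ring

/-! ### Prime power cycles -/

lemma cycleGraph_adj_iff {n : ℕ} (hn : 2 ≤ n) (a b : Fin n) :
    (cycleGraph n).Adj a b ↔ a.val + 1 = b.val ∨ b.val + 1 = a.val ∨
      (a.val = 0 ∧ b.val = n - 1) ∨ (b.val = 0 ∧ a.val = n - 1) := by
  rw [cycleGraph_adj']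
  have ha := a.isLt
  have hb := b.isLt
  rw [Fin.sub_def, Fin.sub_def]
  simp only
  rcases lt_trichotomy a.val b.val with h | h | h
  · rw [Nat.mod_eq_of_lt (a := n - b.val + a.val) (by omega),
      show n - a.val + b.val = (b.val - a.val) + n by omega, Nat.add_mod_right,
      Nat.mod_eq_of_lt (by omega)]
    omega
  · rw [h, show n - b.val + b.val = n by omega, Nat.mod_self]
    omega
  · rw [Nat.mod_eq_of_lt (a := n - a.val + b.val) (by omega),
      show n - b.val + a.val = (a.val - b.val) + n by omega, Nat.add_mod_right,
      Nat.mod_eq_of_lt (by omega)]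
    omega

lemma cycleGraph_adj_add_one {n : ℕ} [NeZero n] (a b : Fin n) :
    (cycleGraph n).Adj (a + 1) (b + 1) ↔ (cycleGraph n).Adj a b := by
  rw [cycleGraph_adj', cycleGraph_adj', add_sub_add_right_eq_sub, add_sub_add_right_eq_sub]

/-- Rotation by one step acts without fixed points on the nonempty independent sets. -/
lemma prime_dvd_indepCount_cycleGraph {p k j : ℕ} (hp : p.Prime) (hn : 2 ≤ p ^ k) (hj : j ≠ 0) :
    p ∣ indepCount (cycleGraph (p ^ k)) j := by
  have : Fact p.Prime := ⟨hp⟩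
  have : NeZero (p ^ k) := ⟨by omega⟩
  let α := {s : Finset (Fin (p ^ k)) //
    #s = j ∧ ∀ u ∈ s, ∀ v ∈ s, ¬ (cycleGraph (p ^ k)).Adj u v}
  let f : Function.End α := fun s => ⟨s.1.map (addRightEmbedding 1), by
    refine ⟨by rw [card_map]; exact s.2.1, ?_⟩
    simp only [mem_map, addRightEmbedding_apply]
    rintro _ ⟨a, ha, rfl⟩ _ ⟨b, hb, rfl⟩
    rw [cycleGraph_adj_add_one]
    exact s.2.2 a ha b hb⟩
  have hpow : ∀ (m : ℕ) (s : α), ((f ^ m) s).1 = s.1.map (addRightEmbedding (m • 1)) := by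
    intro m
    induction m with
    | zero =>
      intro s
      ext x
      simp [Function.End.one_def]
    | succ m ih =>
      intro s
      rw [pow_succ']
      change ((f ^ m) s).1.map (addRightEmbedding 1) = _
      rw [ih, Finset.map_map]
      congr 1
      ext x
      simp [add_assoc, succ_nsmul]
  have hf : f ^ p ^ k = 1 := by
    funext s
    refine Subtype.ext ?_
    have h0 : p ^ k • (1 : Fin (p ^ k)) = 0 := by
      simpa using card_nsmul_eq_zero' (x := (1 : Fin (p ^ k)))
    rw [hpow, h0]
    ext x
    simp [Function.End.one_def]
  have hmod := Equiv.Perm.card_fixedPoints_modEq hf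
  have hempty : IsEmpty f.fixedPoints := by
    refine ⟨fun ⟨s, hs⟩ => ?_⟩
    have hs1 : s.1.map (addRightEmbedding 1) = s.1 := congrArg Subtype.val hs
    have hne : s.1.Nonempty := by
      rw [← Finset.card_ne_zero, s.2.1]
      exact hj
    obtain ⟨a, ha⟩ := hne
    have ha1 : a + 1 ∈ s.1 := by
      rw [← hs1]
      simpa using ha
    refine s.2.2 a ha _ ha1 ?_
    rw [cycleGraph_adj']
    right
    rw [add_sub_cancel_left, Fin.val_one', Nat.mod_eq_of_lt hn]
  rw [Fintype.card_eq_zero (α := f.fixedPoints)] at hmod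
  rw [indepCount, Nat.card_eq_fintype_card]
  exact (Nat.modEq_zero_iff_dvd).1 hmod

lemma dvd_coeff_of_mul_eq {p : ℕ} (hp : p.Prime) {P Q R : ℤ[X]} (hPQ : P * Q = R)
    (hR0 : R.coeff 0 = 1) (hR : ∀ j, j ≠ 0 → (p : ℤ) ∣ R.coeff j) {j : ℕ} (hj : j ≠ 0) :
    (p : ℤ) ∣ P.coeff j := by
  have : Fact p.Prime := ⟨hp⟩
  have h1 : R.map (Int.castRingHom (ZMod p)) = 1 := by
    ext j
    rw [coeff_map, coeff_one]
    split_ifs with h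
    · rw [h, hR0]
      simp
    · simpa using (ZMod.intCast_zmod_eq_zero_iff_dvd _ _).2 (hR j h)
  have h2 : IsUnit (P.map (Int.castRingHom (ZMod p))) := by
    refine IsUnit.of_mul_eq_one (Q.map (Int.castRingHom (ZMod p))) ?_
    rw [← Polynomial.map_mul, hPQ, h1]
  have h3 := coeff_eq_zero_of_natDegree_lt (p := P.map (Int.castRingHom (ZMod p))) (n := j)
    (by rw [natDegree_eq_zero_of_isUnit h2]; omega)
  rw [coeff_map] at h3
  exact (ZMod.intCast_zmod_eq_zero_iff_dvd _ _).1 (by simpa using h3)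

lemma cycleGraph_degree {n : ℕ} (hn : 3 ≤ n) (v : Fin n)
    [Fintype ((cycleGraph n).neighborSet v)] : (cycleGraph n).degree v = 2 := by
  obtain ⟨m, rfl⟩ := Nat.exists_eq_add_of_le' hn
  convert cycleGraph_degree_three_le (v := v)

lemma cycleGraph_triangleDegree {n : ℕ} (hn : 4 ≤ n) (v : Fin n) :
    triangleDegree (cycleGraph n) v = 0 := by
  refine Finset.sum_eq_zero fun y _ => Finset.sum_eq_zero fun z _ => if_neg ?_
  rintro ⟨h1, h2, h3⟩
  rw [cycleGraph_adj_iff (by omega)] at h1 h2 h3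
  omega

/-! ### Triangles in unicyclic graphs -/

lemma not_isBridge_of_triangle {G : SimpleGraph V} {x y z : V} (hxy : G.Adj x y)
    (hxz : G.Adj x z) (hyz : G.Adj y z) : ¬ G.IsBridge s(x, y) := by
  rw [isBridge_iff, not_not]
  have h1 : (G.deleteEdges {s(x, y)}).Adj x z := by
    rw [deleteEdges_adj]
    refine ⟨hxz, ?_⟩
    have := hyz.ne
    have := hxy.ne
    simp
    grind
  have h2 : (G.deleteEdges {s(x, y)}).Adj z y := by
    rw [deleteEdges_adj]
    refine ⟨hyz.symm, ?_⟩
    have := hxz.ne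
    have := hyz.ne
    simp
    grind
  exact h1.reachable.trans h2.reachable

lemma card_edgeSet_deleteEdges_singleton [Finite V] {G : SimpleGraph V} {x y : V}
    (h : G.Adj x y) : Nat.card (G.deleteEdges {s(x, y)}).edgeSet + 1 = Nat.card G.edgeSet := by
  rw [edgeSet_deleteEdges, Nat.card_coe_set_eq, Nat.card_coe_set_eq]
  exact Set.ncard_sdiff_singleton_add_one h

lemma mem_triangle_of_triangle [Finite V] {G : SimpleGraph V} (hG : G.Connected)
    (hcard : Nat.card G.edgeSet ≤ Nat.card V) {x y z x' y' z' : V}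
    (hxy : G.Adj x y) (hxz : G.Adj x z) (hyz : G.Adj y z)
    (hxy' : G.Adj x' y') (hxz' : G.Adj x' z') (hyz' : G.Adj y' z') :
    x' = x ∨ x' = y ∨ x' = z := by
  by_contra! hne
  obtain ⟨h1, h2, h3⟩ := hne
  have c1 := hG.connected_delete_edge_of_not_isBridge (not_isBridge_of_triangle hxy' hxz' hyz')
  have e1 := card_edgeSet_deleteEdges_singleton hxy'
  have mono : ∀ {a b : V}, G.Adj a b → a ≠ x' → b ≠ x' →
      (G.deleteEdges {s(x', y')}).Adj a b := by
    intro a b hab ha hb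
    rw [deleteEdges_adj]
    refine ⟨hab, ?_⟩
    simp
    grind
  have hxy1 := mono hxy h1.symm h2.symm
  have c2 := c1.connected_delete_edge_of_not_isBridge
    (not_isBridge_of_triangle hxy1 (mono hxz h1.symm h3.symm) (mono hyz h2.symm h3.symm))
  have e2 := card_edgeSet_deleteEdges_singleton hxy1
  have := c2.card_vert_le_card_edgeSet_add_one
  omega

section Component

variable [Fintype V] {G : SimpleGraph V} (c : G.ConnectedComponent)

/-- The vertex set of a connected component. -/
noncomputable def componentVerts : Finset V := univ.filter fun v => G.connectedComponentMk v = c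

variable {c}

lemma mem_componentVerts {v : V} : v ∈ componentVerts c ↔ G.connectedComponentMk v = c := by
  simp [componentVerts]

lemma mem_componentVerts_of_adj : ∀ x ∈ componentVerts c, ∀ y, G.Adj x y →
    y ∈ componentVerts c := by
  intro x hx y hxy
  rw [mem_componentVerts] at hx ⊢
  rw [← hx]
  exact ConnectedComponent.sound hxy.symm.reachable

lemma card_component (c : G.ConnectedComponent) : Nat.card c = #(componentVerts c) := by
  rw [Nat.card_eq_fintype_card, componentVerts, ← Fintype.card_subtype]
  rfl

lemma two_mul_card_edgeSet_component (c : G.ConnectedComponent) :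
    2 * Nat.card c.toSimpleGraph.edgeSet = ∑ v ∈ componentVerts c, G.degree v := by
  rw [Nat.card_eq_fintype_card, ← edgeFinset_card, ← sum_degrees_eq_twice_card_edges,
    Finset.sum_subtype (componentVerts c) (p := (· ∈ c.supp)) (fun v => mem_componentVerts)]
  refine Fintype.sum_congr _ _ fun v => ?_
  refine Eq.trans ?_ (degree_induce_of_neighborSet_subset (G := G) (s := c.supp) (v := v) ?_)
  · rw [← card_neighborSet_eq_degree, ← card_neighborSet_eq_degree, ← Nat.card_eq_fintype_card,
      ← Nat.card_eq_fintype_card]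
    rfl
  · intro w hw
    exact mem_componentVerts.1 (mem_componentVerts_of_adj _ (mem_componentVerts.2 v.2) w hw)

lemma sum_triangleDegree_component (hcard : ∑ v ∈ componentVerts c, G.degree v =
    2 * #(componentVerts c)) :
    ∑ v ∈ componentVerts c, triangleDegree G v = 0 ∨
      (∑ v ∈ componentVerts c, triangleDegree G v = 6 ∧
        ∃ x ∈ componentVerts c, ∃ y z, G.Adj x y ∧ G.Adj x z ∧ G.Adj y z) := by
  by_cases h : ∃ x ∈ componentVerts c, ∃ y z, G.Adj x y ∧ G.Adj x z ∧ G.Adj y z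
  · refine Or.inr ⟨?_, h⟩
    obtain ⟨x, hx, y, z, hxy, hxz, hyz⟩ := h
    have hy := mem_componentVerts_of_adj x hx y hxy
    have hz := mem_componentVerts_of_adj x hx z hxz
    have key : ∀ x' ∈ componentVerts c, ∀ y' z', G.Adj x' y' → G.Adj x' z' → G.Adj y' z' →
        x' = x ∨ x' = y ∨ x' = z := by
      intro x' hx' y' z' hxy' hxz' hyz'
      have hy' := mem_componentVerts_of_adj x' hx' y' hxy'
      have hz' := mem_componentVerts_of_adj x' hx' z' hxz'
      rw [mem_componentVerts] at hx hy hz hx' hy' hz'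
      have := mem_triangle_of_triangle c.connected_toSimpleGraph
        (by rw [card_component]; have := two_mul_card_edgeSet_component c; omega)
        ((c.toSimpleGraph_adj hx hy).2 hxy) ((c.toSimpleGraph_adj hx hz).2 hxz)
        ((c.toSimpleGraph_adj hy hz).2 hyz) ((c.toSimpleGraph_adj hx' hy').2 hxy')
        ((c.toSimpleGraph_adj hx' hz').2 hxz') ((c.toSimpleGraph_adj hy' hz').2 hyz')
      simpa [Subtype.ext_iff] using this
    have hset : ((componentVerts c ×ˢ (univ : Finset (V × V))).filter fun q =>
        G.Adj q.1 q.2.1 ∧ G.Adj q.1 q.2.2 ∧ G.Adj q.2.1 q.2.2) =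
        {(x, y, z), (x, z, y), (y, x, z), (y, z, x), (z, x, y), (z, y, x)} := by
      ext ⟨x', y', z'⟩
      simp only [mem_filter, mem_product, mem_univ, and_true, mem_insert, mem_singleton,
        Prod.mk.injEq]
      constructor
      · rintro ⟨hx', h1, h2, h3⟩
        have k1 := key x' hx' y' z' h1 h2 h3
        have k2 := key y' (mem_componentVerts_of_adj x' hx' y' h1) x' z' h1.symm h3 h2
        have k3 := key z' (mem_componentVerts_of_adj x' hx' z' h2) x' y' h2.symm h3.symm h1
        have := h1.ne
        have := h2.ne
        have := h3.ne
        grind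
      · have := hxy.symm
        have := hxz.symm
        have := hyz.symm
        rintro (⟨rfl, rfl, rfl⟩ | ⟨rfl, rfl, rfl⟩ | ⟨rfl, rfl, rfl⟩ | ⟨rfl, rfl, rfl⟩ |
          ⟨rfl, rfl, rfl⟩ | ⟨rfl, rfl, rfl⟩) <;> simp [*]
    have hsum : ∑ v ∈ componentVerts c, triangleDegree G v =
        #((componentVerts c ×ˢ (univ : Finset (V × V))).filter fun q =>
        G.Adj q.1 q.2.1 ∧ G.Adj q.1 q.2.2 ∧ G.Adj q.2.1 q.2.2) := by
      rw [← Finset.sum_boole, Finset.sum_product]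
      refine Finset.sum_congr rfl fun v _ => ?_
      rw [Fintype.sum_prod_type, triangleDegree]
    rw [hsum, hset]
    have := hxy.ne
    have := hxz.ne
    have := hyz.ne
    have := hxy.ne'
    have := hxz.ne'
    have := hyz.ne'
    simp [*]
  · left
    refine Finset.sum_eq_zero fun x hx => Finset.sum_eq_zero fun y _ =>
      Finset.sum_eq_zero fun z _ => if_neg fun hxyz => h ⟨x, hx, y, z, hxyz⟩

end Component

/-! ### Paths closed up by one additional edge -/

/-- Two indices in `{0, …, k - 1}` are consecutive, or they are `i` and `k - 1`. -/
def LoopRel (k i a b : ℕ) : Prop :=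
  a + 1 = b ∨ b + 1 = a ∨ (a = i ∧ b + 1 = k) ∨ (b = i ∧ a + 1 = k)

/-- `u 0, …, u (k - 1)` enumerates `A`, and the edges of `G` on `A` are those of this path
together with the edge from `u i` to the last vertex. The two options for `i` give a cycle and
a triangle with a pendant path. -/
structure IsLoopedPath (G : SimpleGraph V) (A : Finset V) (k i : ℕ) (u : ℕ → V) : Prop where
  three_le : 3 ≤ k
  loop : i = 0 ∨ i + 3 = k
  inj : ∀ a < k, ∀ b < k, u a = u b → a = b
  eq_image : A = (range k).image u
  adj_iff : ∀ a < k, ∀ b < k, (G.Adj (u a) (u b) ↔ LoopRel k i a b)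

lemma IsLoopedPath.card_eq {G : SimpleGraph V} {A : Finset V} {k i : ℕ} {u : ℕ → V}
    (h : IsLoopedPath G A k i u) : #A = k := by
  rw [h.eq_image, card_image_of_injOn, card_range]
  intro a ha b hb
  exact h.inj a (by simpa using ha) b (by simpa using hb)

lemma erase_image_eq {u : ℕ → V} {I : Finset ℕ} (hu : ∀ a ∈ I, ∀ b ∈ I, u a = u b → a = b)
    {t : ℕ} (ht : t ∈ I) : (I.image u).erase (u t) = (I.erase t).image u := by
  ext x
  simp only [mem_erase, mem_image]
  constructor
  · rintro ⟨hx, a, ha, rfl⟩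
    exact ⟨a, ⟨fun h => hx (h ▸ rfl), ha⟩, rfl⟩
  · rintro ⟨a, ⟨hat, ha⟩, rfl⟩
    exact ⟨fun h => hat (hu a ha t ht h), a, ha, rfl⟩

lemma nonNbrs_image_eq (G : SimpleGraph V) {u : ℕ → V} {I : Finset ℕ}
    (hu : ∀ a ∈ I, ∀ b ∈ I, u a = u b → a = b) {t : ℕ} (ht : t ∈ I) :
    nonNbrs G (I.image u) (u t) = (I.filter fun b => b ≠ t ∧ ¬ G.Adj (u t) (u b)).image u := by
  ext x
  simp only [mem_nonNbrs, mem_image, mem_filter]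
  constructor
  · rintro ⟨⟨a, ha, rfl⟩, h1, h2⟩
    exact ⟨a, ⟨ha, fun h => h1 (h ▸ rfl), h2⟩, rfl⟩
  · rintro ⟨a, ⟨ha, h1, h2⟩, rfl⟩
    exact ⟨⟨a, ha, rfl⟩, fun h => h1 (hu a ha t ht h), h2⟩

lemma aeval_indepPoly_path (G : SimpleGraph V) (u : ℕ → V) (s j : ℕ)
    (hu : ∀ a ∈ Ico s (s + j), ∀ b ∈ Ico s (s + j), u a = u b → a = b)
    (hadj : ∀ a ∈ Ico s (s + j), ∀ b ∈ Ico s (s + j),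
      (G.Adj (u a) (u b) ↔ a + 1 = b ∨ b + 1 = a)) :
    aeval (-1 / 4 : ℚ) (indepPoly G ((Ico s (s + j)).image u)) = (j + 2) * (1 / 2) ^ (j + 1) := by
  induction j using Nat.twoStepInduction with
  | zero => norm_num [indepPoly_empty]
  | one =>
    have h1 : (Ico s (s + 1)).image u = {u s} := by simp
    have h2 : nonNbrs G {u s} (u s) = ∅ := by
      ext x
      simp only [mem_nonNbrs, mem_singleton, notMem_empty, iff_false]
      tauto
    rw [h1, indepPoly_delete G (mem_singleton_self (u s)), h2, Finset.erase_singleton,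
      indepPoly_empty]
    norm_num
  | more j ih0 ih1 =>
    have sub0 : ∀ a ∈ Ico s (s + j), a ∈ Ico s (s + (j + 2)) := by
      intro a
      simp only [mem_Ico]
      omega
    have sub1 : ∀ a ∈ Ico s (s + (j + 1)), a ∈ Ico s (s + (j + 2)) := by
      intro a
      simp only [mem_Ico]
      omega
    have hlast : s + (j + 1) ∈ Ico s (s + (j + 2)) := by
      simp only [mem_Ico]
      omega
    have e1 : (Ico s (s + (j + 2))).erase (s + (j + 1)) = Ico s (s + (j + 1)) := by
      ext a
      simp only [mem_erase, mem_Ico]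
      omega
    have e2 : ((Ico s (s + (j + 2))).filter
        fun b => b ≠ s + (j + 1) ∧ ¬ G.Adj (u (s + (j + 1))) (u b)) = Ico s (s + j) := by
      ext a
      rw [mem_filter]
      constructor
      · rintro ⟨ha, h1, h2⟩
        rw [hadj _ hlast a ha] at h2
        rw [mem_Ico] at ha ⊢
        omega
      · intro ha
        refine ⟨sub0 a ha, ?_, ?_⟩
        · rw [mem_Ico] at ha
          omega
        · rw [hadj _ hlast a (sub0 a ha)]
          rw [mem_Ico] at ha
          omega
    rw [indepPoly_delete G (mem_image_of_mem u hlast), erase_image_eq hu hlast,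
      nonNbrs_image_eq G hu hlast, e1, e2, map_add, map_mul, aeval_X,
      ih0 (fun a ha b hb => hu a (sub0 a ha) b (sub0 b hb))
        (fun a ha b hb => hadj a (sub0 a ha) b (sub0 b hb)),
      ih1 (fun a ha b hb => hu a (sub1 a ha) b (sub1 b hb))
        (fun a ha b hb => hadj a (sub1 a ha) b (sub1 b hb))]
    push_cast
    ring

lemma IsLoopedPath.aeval_indepPoly {G : SimpleGraph V} {A : Finset V} {k i : ℕ} {u : ℕ → V}
    (h : IsLoopedPath G A k i u) :
    aeval (-1 / 4 : ℚ) (indepPoly G A) = 2 * (1 / 2) ^ #A := by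
  have hk := h.three_le
  have hi := h.loop
  rw [h.card_eq, h.eq_image]
  obtain ⟨m, rfl⟩ := Nat.exists_eq_add_of_le' hk
  have hu : ∀ a ∈ range (m + 3), ∀ b ∈ range (m + 3), u a = u b → a = b :=
    fun a ha b hb => h.inj a (mem_range.1 ha) b (mem_range.1 hb)
  have hlast : m + 2 ∈ range (m + 3) := mem_range.2 (by omega)
  have hpath : ∀ s j, s + j ≤ m + 2 →
      aeval (-1 / 4 : ℚ) (indepPoly G ((Ico s (s + j)).image u)) =
        (j + 2) * (1 / 2) ^ (j + 1) := by
    intro s j hsj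
    refine aeval_indepPoly_path G u s j (fun a ha b hb => ?_) (fun a ha b hb => ?_)
    all_goals rw [mem_Ico] at ha hb
    · exact h.inj a (by omega) b (by omega)
    · rw [h.adj_iff a (by omega) b (by omega), LoopRel]
      omega
  have e1 : (range (m + 3)).erase (m + 2) = Ico 0 (0 + (m + 2)) := by
    ext a
    simp only [mem_erase, mem_Ico, mem_range]
    omega
  have e2 : ((range (m + 3)).filter fun b => b ≠ m + 2 ∧ ¬ G.Adj (u (m + 2)) (u b)) =
      if i = 0 then Ico 1 (1 + m) else Ico 0 (0 + m) := by
    ext a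
    rw [mem_filter, mem_range]
    by_cases ha : a < m + 3
    · rw [h.adj_iff (m + 2) (by omega) a ha, LoopRel]
      split_ifs with h0
      all_goals
        rw [mem_Ico]
        omega
    · split_ifs with h0
      all_goals
        rw [mem_Ico]
        omega
  have e3 : aeval (-1 / 4 : ℚ)
      (indepPoly G ((if i = 0 then Ico 1 (1 + m) else Ico 0 (0 + m)).image u)) =
        (m + 2) * (1 / 2) ^ (m + 1) := by
    split_ifs with h0
    · exact hpath 1 m (by omega)
    · exact hpath 0 m (by omega)
  rw [indepPoly_delete G (mem_image_of_mem u hlast), erase_image_eq hu hlast,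
    nonNbrs_image_eq G hu hlast, e1, e2, map_add, map_mul, aeval_X, e3, hpath 0 (m + 2) (by omega)]
  push_cast
  ring

lemma loopRel_adj {G : SimpleGraph V} {k i : ℕ} {u : ℕ → V}
    (hadj : ∀ a, a + 1 < k → G.Adj (u a) (u (a + 1)))
    (hlast : G.Adj (u (k - 1)) (u i)) :
    ∀ a < k, ∀ b < k, LoopRel k i a b → G.Adj (u a) (u b) := by
  rintro a ha b hb (rfl | rfl | ⟨rfl, rfl⟩ | ⟨rfl, rfl⟩)
  · exact hadj a hb
  · exact (hadj b ha).symm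
  · exact hlast.symm
  · exact hlast

section Component

variable [Fintype V] {G : SimpleGraph V} {c : G.ConnectedComponent}

/-- A longest path starting at `ℓ` ends in a vertex having a further neighbour on the path. -/
lemma exists_closed_path {ℓ : V} (hℓ : ℓ ∈ componentVerts c) (h1 : 1 ≤ G.degree ℓ)
    (h2 : ∀ v ∈ componentVerts c, v ≠ ℓ → 2 ≤ G.degree v) :
    ∃ (k i : ℕ) (u : ℕ → V), i + 3 ≤ k ∧ u 0 = ℓ ∧ (∀ a < k, ∀ b < k, u a = u b → a = b) ∧
      (∀ a, a + 1 < k → G.Adj (u a) (u (a + 1))) ∧ G.Adj (u (k - 1)) (u i) ∧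
      ∀ a < k, u a ∈ componentVerts c := by
  let P : ℕ → Prop := fun k => ∃ u : ℕ → V, u 0 = ℓ ∧ (∀ a < k, ∀ b < k, u a = u b → a = b) ∧
      (∀ a, a + 1 < k → G.Adj (u a) (u (a + 1)))
  have hmax : ∃ k, P (k + 1) ∧ ¬ P (k + 2) := by
    by_contra! hcon
    have hall : ∀ k, P (k + 1) := by
      intro k
      induction k with
      | zero => exact ⟨fun _ => ℓ, rfl, fun a ha b hb _ => by omega, fun a ha => by omega⟩
      | succ k ih => exact hcon k ih
    obtain ⟨u, -, hu, -⟩ := hall (Fintype.card V)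
    have hcard : #((range (Fintype.card V + 1)).image u) = Fintype.card V + 1 := by
      rw [card_image_of_injOn, card_range]
      intro a ha b hb
      exact hu a (by simpa using ha) b (by simpa using hb)
    have := Finset.card_le_univ ((range (Fintype.card V + 1)).image u)
    omega
  obtain ⟨k, ⟨u, hu0, hinj, hadj⟩, hk⟩ := hmax
  have hmem : ∀ a < k + 1, u a ∈ componentVerts c := by
    intro a
    induction a with
    | zero =>
      intro _
      rwa [hu0]
    | succ a ih =>
      intro ha
      exact mem_componentVerts_of_adj _ (ih (by omega)) _ (hadj a ha)
  have hlast : ∀ w, G.Adj (u k) w → ∃ b < k + 1, u b = w := by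
    intro w hw
    by_contra! hcon
    refine hk ⟨Function.update u (k + 1) w, ?_, ?_, ?_⟩
    · simpa [Function.update_apply] using hu0
    · intro a ha b hb hab
      simp only [Function.update_apply] at hab
      split_ifs at hab with e1 e2 e2
      · omega
      · exact absurd hab.symm (hcon b (by omega))
      · exact absurd hab (hcon a (by omega))
      · exact hinj a (by omega) b (by omega) hab
    · intro a ha
      simp only [Function.update_apply]
      rw [if_neg (by omega)]
      split_ifs with e
      · obtain rfl : a = k := by omega
        exact hw
      · exact hadj a (by omega)
  have hk1 : k ≠ 0 := by
    rintro rfl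
    obtain ⟨w, hw⟩ := (G.degree_pos_iff_exists_adj ℓ).1 h1
    obtain ⟨b, hb, rfl⟩ := hlast w (by rwa [hu0])
    obtain rfl : b = 0 := by omega
    rw [hu0] at hw
    exact G.loopless.irrefl _ hw
  have hkl : u k ≠ ℓ := by
    rw [← hu0]
    exact fun h => hk1 (hinj k (by omega) 0 (by omega) h)
  have hdeg := h2 (u k) (hmem k (by omega)) hkl
  rw [← card_neighborFinset_eq_degree] at hdeg
  obtain ⟨w, hw, hne⟩ := Finset.exists_mem_ne hdeg (u (k - 1))
  rw [mem_neighborFinset] at hw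
  obtain ⟨i, hi, rfl⟩ := hlast w hw
  have hik : i ≠ k := by
    rintro rfl
    exact G.loopless.irrefl _ hw
  have hik1 : i ≠ k - 1 := fun h => hne (h ▸ rfl)
  exact ⟨k + 1, i, u, by omega, hu0, hinj, hadj, hw, hmem⟩

/-- If no vertex of a closed path has neighbours besides the evident ones, then the closed path
is the entire component. -/
lemma closed_path_eq_component {k i : ℕ} {u : ℕ → V} (hik : i + 3 ≤ k)
    (hinj : ∀ a < k, ∀ b < k, u a = u b → a = b)
    (hadj : ∀ a < k, ∀ b < k, LoopRel k i a b → G.Adj (u a) (u b))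
    (hmem : ∀ a < k, u a ∈ componentVerts c)
    (hdeg : ∀ a < k, ∃ s : Finset ℕ, (∀ b ∈ s, b < k ∧ LoopRel k i a b) ∧ G.degree (u a) ≤ #s) :
    componentVerts c = (range k).image u ∧
      ∀ a < k, ∀ b < k, (G.Adj (u a) (u b) ↔ LoopRel k i a b) := by
  have hnbr : ∀ a < k, ∀ w, G.Adj (u a) w → ∃ b < k, u b = w ∧ LoopRel k i a b := by
    intro a ha w hw
    obtain ⟨s, hs, hcard⟩ := hdeg a ha
    have hsub : s.image u ⊆ G.neighborFinset (u a) := by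
      intro x hx
      obtain ⟨b, hb, rfl⟩ := mem_image.1 hx
      rw [mem_neighborFinset]
      exact hadj a ha b (hs b hb).1 (hs b hb).2
    have himg : #(s.image u) = #s := card_image_of_injOn fun x hx y hy =>
      hinj x (hs x hx).1 y (hs y hy).1
    have heq := Finset.eq_of_subset_of_card_le hsub
      (by rw [card_neighborFinset_eq_degree, himg]; exact hcard)
    have hw' : w ∈ s.image u := by
      rw [heq, mem_neighborFinset]
      exact hw
    obtain ⟨b, hb, rfl⟩ := mem_image.1 hw'
    exact ⟨b, (hs b hb).1, rfl, (hs b hb).2⟩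
  constructor
  · ext x
    simp only [mem_image, mem_range]
    constructor
    · intro hx
      have hreach : G.Reachable (u 0) x := by
        rw [← ConnectedComponent.eq, mem_componentVerts.1 hx,
          mem_componentVerts.1 (hmem 0 (by omega))]
      rw [reachable_iff_reflTransGen] at hreach
      induction hreach with
      | refl => exact ⟨0, by omega, rfl⟩
      | tail _ hyz ih =>
        obtain ⟨a, ha, rfl⟩ := ih (mem_componentVerts_of_adj _ hx _ hyz.symm)
        obtain ⟨b, hb, h, -⟩ := hnbr a ha _ hyz
        exact ⟨b, hb, h⟩
    · rintro ⟨a, ha, rfl⟩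
      exact hmem a ha
  · intro a ha b hb
    refine ⟨fun h => ?_, hadj a ha b hb⟩
    obtain ⟨b', hb', h1, h2⟩ := hnbr a ha _ h
    rwa [← hinj b' hb' b hb h1]

lemma three_le_degree {v x y z : V} (hx : G.Adj v x) (hy : G.Adj v y) (hz : G.Adj v z)
    (hxy : x ≠ y) (hxz : x ≠ z) (hyz : y ≠ z) : 3 ≤ G.degree v := by
  rw [← card_neighborFinset_eq_degree, ← Finset.card_eq_three.2 ⟨x, y, z, hxy, hxz, hyz, rfl⟩]
  refine Finset.card_le_card fun w hw => ?_
  simp only [mem_insert, mem_singleton] at hw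
  rw [mem_neighborFinset]
  rcases hw with rfl | rfl | rfl <;> assumption

lemma exists_isLoopedPath_of_degree_eq_two (hne : (componentVerts c).Nonempty)
    (h : ∀ v ∈ componentVerts c, G.degree v = 2) :
    ∃ k i u, IsLoopedPath G (componentVerts c) k i u := by
  obtain ⟨ℓ, hℓ⟩ := hne
  obtain ⟨k, i, u, hik, -, hinj, hadj, hlast, hmem⟩ :=
    exists_closed_path hℓ (by rw [h ℓ hℓ]; omega) fun v hv _ => by rw [h v hv]
  have hrel := loopRel_adj hadj hlast
  have hi : i = 0 := by
    by_contra hi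
    have := three_le_degree (hrel i (by omega) (i - 1) (by omega) (by unfold LoopRel; omega))
      (hrel i (by omega) (i + 1) (by omega) (by unfold LoopRel; omega))
      (hrel i (by omega) (k - 1) (by omega) (by unfold LoopRel; omega))
      (fun e => by have := hinj _ (by omega) _ (by omega) e; omega)
      (fun e => by have := hinj _ (by omega) _ (by omega) e; omega)
      (fun e => by have := hinj _ (by omega) _ (by omega) e; omega)
    have := h _ (hmem i (by omega))
    omega
  subst hi
  have hdeg : ∀ a < k, ∃ s : Finset ℕ, (∀ b ∈ s, b < k ∧ LoopRel k 0 a b) ∧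
      G.degree (u a) ≤ #s := by
    intro a ha
    refine ⟨{if a = 0 then k - 1 else a - 1, if a = k - 1 then 0 else a + 1}, ?_, ?_⟩
    · intro b hb
      simp only [mem_insert, mem_singleton] at hb
      unfold LoopRel
      split_ifs at hb <;> omega
    · rw [h _ (hmem a ha), card_pair]
      split_ifs <;> omega
  obtain ⟨h1, h2⟩ := closed_path_eq_component hik hinj hrel hmem hdeg
  exact ⟨k, 0, u, hik, Or.inl rfl, hinj, h1, h2⟩

lemma exists_isLoopedPath_of_triangle {ℓ w : V} (hℓ : ℓ ∈ componentVerts c)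
    (hℓ1 : G.degree ℓ = 1) (hw3 : G.degree w = 3)
    (h : ∀ v ∈ componentVerts c, v ≠ ℓ → v ≠ w → G.degree v = 2)
    (htri : ∃ x ∈ componentVerts c, ∃ y z, G.Adj x y ∧ G.Adj x z ∧ G.Adj y z) :
    ∃ k i u, IsLoopedPath G (componentVerts c) k i u := by
  obtain ⟨k, i, u, hik, hu0, hinj, hadj, hlast, hmem⟩ :=
    exists_closed_path hℓ (by omega) fun v hv hvl => by
      by_cases hvw : v = w
      · subst hvw
        omega
      · rw [h v hv hvl hvw]
  have hrel := loopRel_adj hadj hlast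
  have hi : i ≠ 0 := by
    rintro rfl
    have h2 : 1 < #(G.neighborFinset (u 0)) := Finset.one_lt_card.2
      ⟨u 1, by
        rw [mem_neighborFinset]
        exact hrel 0 (by omega) 1 (by omega) (by unfold LoopRel; omega),
      u (k - 1), by
        rw [mem_neighborFinset]
        exact hlast.symm,
      fun e => by have := hinj _ (by omega) _ (by omega) e; omega⟩
    rw [card_neighborFinset_eq_degree, hu0] at h2
    omega
  have hl : ∀ a < k, a ≠ 0 → u a ≠ ℓ := fun a ha h0 e =>
    h0 (hinj a ha 0 (by omega) (e.trans hu0.symm))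
  have hiw : u i = w := by
    by_contra hiw
    have := three_le_degree (hrel i (by omega) (i - 1) (by omega) (by unfold LoopRel; omega))
      (hrel i (by omega) (i + 1) (by omega) (by unfold LoopRel; omega))
      (hrel i (by omega) (k - 1) (by omega) (by unfold LoopRel; omega))
      (fun e => by have := hinj _ (by omega) _ (by omega) e; omega)
      (fun e => by have := hinj _ (by omega) _ (by omega) e; omega)
      (fun e => by have := hinj _ (by omega) _ (by omega) e; omega)
    have := h _ (hmem i (by omega)) (hl i (by omega) hi) hiw
    omega
  have hdeg : ∀ a < k, ∃ s : Finset ℕ, (∀ b ∈ s, b < k ∧ LoopRel k i a b) ∧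
      G.degree (u a) ≤ #s := by
    intro a ha
    by_cases h0 : a = 0
    · subst h0
      refine ⟨{1}, ?_, by rw [hu0, hℓ1, card_singleton]⟩
      intro b hb
      rw [mem_singleton] at hb
      unfold LoopRel
      omega
    · by_cases hai : a = i
      · subst hai
        refine ⟨{a - 1, a + 1, k - 1}, ?_, ?_⟩
        · intro b hb
          simp only [mem_insert, mem_singleton] at hb
          unfold LoopRel
          omega
        · rw [hiw, hw3, Finset.card_eq_three.2
            ⟨a - 1, a + 1, k - 1, by omega, by omega, by omega, rfl⟩]
      · refine ⟨{a - 1, if a = k - 1 then i else a + 1}, ?_, ?_⟩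
        · intro b hb
          simp only [mem_insert, mem_singleton] at hb
          unfold LoopRel
          split_ifs at hb <;> omega
        · rw [h _ (hmem a ha) (hl a ha h0) fun e => hai (hinj a ha i (by omega) (e.trans hiw.symm)),
            card_pair]
          split_ifs <;> omega
  obtain ⟨h1, h2⟩ := closed_path_eq_component hik hinj hrel hmem hdeg
  refine ⟨k, i, u, by omega, Or.inr ?_, hinj, h1, h2⟩
  obtain ⟨x, hx, y, z, hxy, hxz, hyz⟩ := htri
  have hy := mem_componentVerts_of_adj x hx y hxy
  have hz := mem_componentVerts_of_adj x hx z hxz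
  rw [h1, mem_image] at hx hy hz
  obtain ⟨a, ha, rfl⟩ := hx
  obtain ⟨b, hb, rfl⟩ := hy
  obtain ⟨d, hd, rfl⟩ := hz
  rw [mem_range] at ha hb hd
  rw [h2 _ ha _ hb, LoopRel] at hxy
  rw [h2 _ ha _ hd, LoopRel] at hxz
  rw [h2 _ hb _ hd, LoopRel] at hyz
  omega

/-- The local degree conditions determine a unicyclic component. -/
lemma exists_isLoopedPath (hne : (componentVerts c).Nonempty)
    (hsum : ∑ v ∈ componentVerts c, G.degree v = 2 * #(componentVerts c))
    (hsq : 3 * ∑ v ∈ componentVerts c, ((G.degree v : ℤ) - 2) ^ 2 =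
      ∑ v ∈ componentVerts c, triangleDegree G v) :
    ∃ k i u, IsLoopedPath G (componentVerts c) k i u := by
  rcases sum_triangleDegree_component hsum with h0 | ⟨h6, htri⟩
  · refine exists_isLoopedPath_of_degree_eq_two hne fun v hv => ?_
    have hz : ∑ v ∈ componentVerts c, ((G.degree v : ℤ) - 2) ^ 2 = 0 := by omega
    have := (Finset.sum_eq_zero_iff_of_nonneg fun v _ => sq_nonneg _).1 hz v hv
    have := pow_eq_zero_iff (two_ne_zero) |>.1 this
    omega
  · have h2 : ∑ v ∈ componentVerts c, ((G.degree v : ℤ) - 2) ^ 2 = 2 := by omega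
    have hlin : ∑ v ∈ componentVerts c, ((G.degree v : ℤ) - 2) = 0 := by
      have : (∑ v ∈ componentVerts c, (G.degree v : ℤ)) = 2 * #(componentVerts c) := by
        exact_mod_cast hsum
      rw [Finset.sum_sub_distrib, this]
      simp
      ring
    have hnz : ∃ v ∈ componentVerts c, (G.degree v : ℤ) - 2 ≠ 0 := by
      by_contra! hcon
      rw [Finset.sum_eq_zero fun v hv => by rw [hcon v hv]; rfl] at h2
      omega
    have hle : ∀ v ∈ componentVerts c, ((G.degree v : ℤ) - 2) ^ 2 ≤ 2 := fun v hv =>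
      (Finset.single_le_sum (f := fun v => ((G.degree v : ℤ) - 2) ^ 2)
        (fun v _ => sq_nonneg _) hv).trans_eq h2
    have habs : ∀ v ∈ componentVerts c, (G.degree v : ℤ) - 2 ≤ 1 ∧ -1 ≤ (G.degree v : ℤ) - 2 :=
      fun v hv => ⟨by nlinarith [hle v hv], by nlinarith [hle v hv]⟩
    obtain ⟨w, hw, hwpos⟩ := Finset.exists_pos_of_sum_zero_of_exists_nonzero _ hlin hnz
    obtain ⟨ℓ, hℓ, hℓneg⟩ := Finset.exists_pos_of_sum_zero_of_exists_nonzero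
      (s := componentVerts c) (fun v => -((G.degree v : ℤ) - 2))
      (by rw [Finset.sum_neg_distrib, hlin, neg_zero])
      (by simpa only [ne_eq, neg_eq_zero] using hnz)
    have hw3 : (G.degree w : ℤ) - 2 = 1 := by have := habs w hw; omega
    have hℓ1 : (G.degree ℓ : ℤ) - 2 = -1 := by have := habs ℓ hℓ; omega
    refine exists_isLoopedPath_of_triangle hℓ (w := w) (by omega) (by omega) ?_ htri
    intro v hv hvl hvw
    have hlw : ℓ ≠ w := by
      rintro rfl
      omega
    have hsub : ({v, ℓ, w} : Finset V) ⊆ componentVerts c := by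
      intro x
      simp only [mem_insert, mem_singleton]
      rintro (rfl | rfl | rfl) <;> assumption
    have := Finset.sum_le_sum_of_subset_of_nonneg (f := fun v => ((G.degree v : ℤ) - 2) ^ 2) hsub
      fun v _ _ => sq_nonneg _
    rw [h2, Finset.sum_insert (by simp [hvl, hvw]), Finset.sum_pair hlw, hw3, hℓ1] at this
    have : (G.degree v : ℤ) - 2 = 0 := by
      have h0 : ((G.degree v : ℤ) - 2) ^ 2 = 0 := by
        have := sq_nonneg ((G.degree v : ℤ) - 2)
        omega
      exact pow_eq_zero_iff (two_ne_zero) |>.1 h0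
    omega

end Component

/-! ### The main theorem -/

lemma indepPoly_univ_eq_prod [Fintype V] (G : SimpleGraph V) :
    indepPoly G univ = ∏ c : G.ConnectedComponent, indepPoly G (componentVerts c) := by
  have key : ∀ t : Finset G.ConnectedComponent,
      indepPoly G (univ.filter fun v => G.connectedComponentMk v ∈ t) =
        ∏ c ∈ t, indepPoly G (componentVerts c) := by
    intro t
    induction t using Finset.induction_on with
    | empty => simp [indepPoly_empty]
    | insert c t hc ih =>
      have hunion : (univ.filter fun v => G.connectedComponentMk v ∈ insert c t) =
          componentVerts c ∪ univ.filter fun v => G.connectedComponentMk v ∈ t := by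
        ext v
        simp [mem_componentVerts]
      rw [hunion, indepPoly_union, ih, Finset.prod_insert hc]
      · rw [Finset.disjoint_left]
        intro v hv hv'
        rw [mem_componentVerts] at hv
        rw [mem_filter, hv] at hv'
        exact hc hv'.2
      · intro a ha b hb hab
        have hbc := mem_componentVerts.1 (mem_componentVerts_of_adj a ha b hab)
        rw [mem_filter, hbc] at hb
        exact hc hb.2
  simpa using key univ

lemma sum_componentVerts [Fintype V] (G : SimpleGraph V) {M : Type*} [AddCommMonoid M]
    (f : V → M) : ∑ c : G.ConnectedComponent, ∑ v ∈ componentVerts c, f v = ∑ v, f v :=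
  Finset.sum_fiberwise _ _ _

lemma componentVerts_nonempty [Fintype V] {G : SimpleGraph V} (c : G.ConnectedComponent) :
    (componentVerts c).Nonempty := by
  obtain ⟨v, hv⟩ := c.exists_rep
  exact ⟨v, mem_componentVerts.2 hv⟩

lemma two_mul_card_componentVerts_le [Fintype V] {G : SimpleGraph V} (c : G.ConnectedComponent) :
    2 * #(componentVerts c) ≤ ∑ v ∈ componentVerts c, G.degree v + 2 := by
  have h1 := c.connected_toSimpleGraph.card_vert_le_card_edgeSet_add_one
  rw [card_component] at h1
  have h2 := two_mul_card_edgeSet_component c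
  omega

lemma isLoopedPath_cycleGraph {n : ℕ} (hn : 3 ≤ n) :
    ∃ u, IsLoopedPath (cycleGraph n) univ n 0 u := by
  have : NeZero n := ⟨by omega⟩
  refine ⟨fun a => Fin.ofNat n a, hn, Or.inl rfl, ?_, ?_, ?_⟩
  · intro a ha b hb hab
    simpa [Fin.ext_iff, Nat.mod_eq_of_lt ha, Nat.mod_eq_of_lt hb] using hab
  · symm
    rw [eq_univ_iff_forall]
    intro x
    exact (@mem_image _ _ (_) _ _ _).2 ⟨x.val, mem_range.2 x.isLt, by simp⟩
  · intro a ha b hb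
    rw [cycleGraph_adj_iff (by omega), LoopRel]
    simp only [Fin.val_ofNat, Nat.mod_eq_of_lt ha, Nat.mod_eq_of_lt hb]
    omega

lemma even_sum_sq {ι : Type*} (s : Finset ι) (d : ι → ℤ) (h : ∑ v ∈ s, d v = 0) :
    ∃ m, 0 ≤ m ∧ ∑ v ∈ s, d v ^ 2 = 2 * m := by
  have h2 : (2 : ℤ) ∣ ∑ v ∈ s, (d v ^ 2 - d v) := Finset.dvd_sum fun v _ => by
    have := (Int.even_mul_pred_self (d v)).two_dvd
    rwa [show d v ^ 2 - d v = d v * (d v - 1) by ring]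
  rw [Finset.sum_sub_distrib, h, sub_zero] at h2
  obtain ⟨m, hm⟩ := h2
  have : 0 ≤ ∑ v ∈ s, d v ^ 2 := Finset.sum_nonneg fun v _ => sq_nonneg _
  exact ⟨m, by omega, hm⟩

section PrimePower

variable [Fintype V] {G : SimpleGraph V} {p k : ℕ}

lemma indepPoly_eq_of_indepCount {n : ℕ} (h : ∀ j, indepCount G j = indepCount (cycleGraph n) j) :
    indepPoly G univ = indepPoly (cycleGraph n) univ := by
  ext j
  rw [coeff_indepPoly_univ, coeff_indepPoly_univ, h]

lemma prime_dvd_coeff_component (hp : p.Prime) (hn : 2 ≤ p ^ k)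
    (h : ∀ j, indepCount G j = indepCount (cycleGraph (p ^ k)) j) (c : G.ConnectedComponent)
    {j : ℕ} (hj : j ≠ 0) : (p : ℤ) ∣ (indepPoly G (componentVerts c)).coeff j := by
  have hmul := indepPoly_univ_eq_prod G
  rw [← Finset.mul_prod_erase univ _ (mem_univ c)] at hmul
  refine dvd_coeff_of_mul_eq hp hmul.symm (coeff_zero_indepPoly _ _) (fun j hj => ?_) hj
  rw [coeff_indepPoly_univ, h]
  exact_mod_cast prime_dvd_indepCount_cycleGraph hp hn hj

/-- The vertex count, degree sum and corrected square sum that `G` shares with the cycle. -/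
lemma global_sums {n : ℕ} (hn : 4 ≤ n)
    (h : ∀ j, indepCount G j = indepCount (cycleGraph n) j) :
    Fintype.card V = n ∧ ∑ v, ((G.degree v : ℤ) - 2) = 0 ∧
      ∑ v, (3 * ((G.degree v : ℤ) - 2) ^ 2 - triangleDegree G v) = 0 := by
  have hpoly := indepPoly_eq_of_indepCount h
  have h1 := coeff_one_indepPoly G univ
  have h2 := two_mul_coeff_two_indepPoly G (A := univ) (by simp)
  have h3 := six_mul_coeff_three_indepPoly G (A := univ) (by simp)
  rw [hpoly, coeff_one_indepPoly] at h1
  rw [hpoly, two_mul_coeff_two_indepPoly _ (by simp)] at h2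
  rw [hpoly, six_mul_coeff_three_indepPoly _ (by simp)] at h3
  simp only [cycleGraph_degree (show 3 ≤ n by omega), cycleGraph_triangleDegree hn,
    Finset.sum_const, card_univ, Fintype.card_fin, nsmul_eq_mul, smul_zero] at h1 h2 h3
  rw [← h1] at h2 h3
  have hD : ∑ v, (G.degree v : ℤ) = 2 * n := by push_cast at h2; linarith
  rw [hD] at h3
  refine ⟨by exact_mod_cast h1.symm, ?_, ?_⟩
  · rw [Finset.sum_sub_distrib, hD, Finset.sum_const, card_univ, nsmul_eq_mul, ← h1]
    ring
  · have expand : ∀ v, 3 * ((G.degree v : ℤ) - 2) ^ 2 - triangleDegree G v =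
        3 * (G.degree v : ℤ) ^ 2 - 12 * G.degree v + 12 - triangleDegree G v := fun v => by ring
    simp only [expand, Finset.sum_sub_distrib, Finset.sum_add_distrib, ← Finset.mul_sum, hD,
      Finset.sum_const, card_univ, nsmul_eq_mul, ← h1]
    push_cast at h3
    linarith

lemma component_isLoopedPath (hp : p.Prime) (hp5 : 5 ≤ p) (hn : 4 ≤ p ^ k)
    (h : ∀ j, indepCount G j = indepCount (cycleGraph (p ^ k)) j) (c : G.ConnectedComponent) :
    ∃ m i u, IsLoopedPath G (componentVerts c) m i u := by
  obtain ⟨-, hlin, hquad⟩ := global_sums hn h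
  have hcard : ∀ c : G.ConnectedComponent, (p : ℤ) ∣ #(componentVerts c) := fun c => by
    rw [← coeff_one_indepPoly G]
    exact prime_dvd_coeff_component hp (by omega) h c one_ne_zero
  have hdeg : ∀ c : G.ConnectedComponent,
      (p : ℤ) ∣ ∑ v ∈ componentVerts c, (G.degree v : ℤ) := fun c => by
    have h2 := two_mul_coeff_two_indepPoly G (mem_componentVerts_of_adj (c := c))
    have hd := prime_dvd_coeff_component hp (by omega) h c two_ne_zero
    have e : ∑ v ∈ componentVerts c, (G.degree v : ℤ) = (#(componentVerts c) : ℤ) *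
        (#(componentVerts c) - 1) - 2 * (indepPoly G (componentVerts c)).coeff 2 := by
      rw [h2]
      ring
    rw [e]
    exact dvd_sub ((hcard c).mul_right _) (hd.mul_left _)
  rw [← sum_componentVerts G] at hlin hquad
  have hsub : ∀ c : G.ConnectedComponent, ∑ v ∈ componentVerts c, ((G.degree v : ℤ) - 2) =
      ∑ v ∈ componentVerts c, (G.degree v : ℤ) - 2 * #(componentVerts c) := fun c => by
    rw [Finset.sum_sub_distrib, Finset.sum_const, nsmul_eq_mul]
    ring
  have hlin0 : ∀ c : G.ConnectedComponent, ∑ v ∈ componentVerts c, ((G.degree v : ℤ) - 2) = 0 := by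
    have hnonneg : ∀ c ∈ (univ : Finset G.ConnectedComponent),
        0 ≤ ∑ v ∈ componentVerts c, ((G.degree v : ℤ) - 2) := by
      intro c _
      have hle : (2 * #(componentVerts c) : ℤ) ≤ ∑ v ∈ componentVerts c, (G.degree v : ℤ) + 2 := by
        exact_mod_cast two_mul_card_componentVerts_le c
      have hdvd : (p : ℤ) ∣ ∑ v ∈ componentVerts c, ((G.degree v : ℤ) - 2) := by
        rw [hsub]
        exact dvd_sub (hdeg c) ((hcard c).mul_left _)
      by_contra! hneg
      have := Int.le_of_dvd (by omega) ((dvd_neg).2 hdvd)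
      rw [hsub] at this
      omega
    exact fun c => (Finset.sum_eq_zero_iff_of_nonneg hnonneg).1 hlin c (mem_univ c)
  have hsum : ∀ c : G.ConnectedComponent,
      ∑ v ∈ componentVerts c, G.degree v = 2 * #(componentVerts c) := fun c => by
    have := hlin0 c
    rw [hsub] at this
    zify
    linarith
  have hexp : ∀ c : G.ConnectedComponent,
      ∑ v ∈ componentVerts c, (3 * ((G.degree v : ℤ) - 2) ^ 2 - triangleDegree G v) =
      3 * ∑ v ∈ componentVerts c, ((G.degree v : ℤ) - 2) ^ 2 -
        ∑ v ∈ componentVerts c, triangleDegree G v := fun c => by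
    rw [Finset.sum_sub_distrib, Finset.mul_sum]
  have hquad0 : ∀ c : G.ConnectedComponent,
      ∑ v ∈ componentVerts c, (3 * ((G.degree v : ℤ) - 2) ^ 2 - triangleDegree G v) = 0 := by
    have hnonneg : ∀ c ∈ (univ : Finset G.ConnectedComponent),
        0 ≤ ∑ v ∈ componentVerts c, (3 * ((G.degree v : ℤ) - 2) ^ 2 - triangleDegree G v) := by
      intro c _
      obtain ⟨m, hm0, hm⟩ := even_sum_sq _ _ (hlin0 c)
      rw [hexp, hm]
      rcases sum_triangleDegree_component (hsum c) with h0 | ⟨h6, -⟩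
      · omega
      · by_contra! hneg
        have hm1 : m = 0 := by omega
        subst hm1
        have h3 := six_mul_coeff_three_indepPoly G (mem_componentVerts_of_adj (c := c))
        have hd := prime_dvd_coeff_component hp (by omega) h c three_ne_zero
        have hsqs : ∑ v ∈ componentVerts c, (G.degree v : ℤ) ^ 2 = 4 * #(componentVerts c) := by
          have expand : ∀ v, (G.degree v : ℤ) ^ 2 =
            ((G.degree v : ℤ) - 2) ^ 2 + 4 * (G.degree v - 2) + 4 := fun v => by ring
          simp only [expand, Finset.sum_add_distrib, ← Finset.mul_sum, hm, hlin0 c,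
            Finset.sum_const, nsmul_eq_mul]
          ring
        have e : (6 : ℕ) * (1 : ℤ) = #(componentVerts c) * (#(componentVerts c) ^ 2
            - 3 * #(componentVerts c) + 2 - 6 * (#(componentVerts c) - 1) + 12)
            - 6 * (indepPoly G (componentVerts c)).coeff 3 := by
          have hs : ∑ v ∈ componentVerts c, (G.degree v : ℤ) = 2 * #(componentVerts c) := by
            exact_mod_cast hsum c
          rw [h3, hsqs, hs, h6]
          push_cast
          ring
        have h6' : (p : ℤ) ∣ (6 : ℕ) * (1 : ℤ) := by
          rw [e]
          exact dvd_sub ((hcard c).mul_right _) (hd.mul_left _)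
        have h6n : p ∣ 2 * 3 := by exact_mod_cast h6'
        rcases (Nat.Prime.dvd_mul hp).1 h6n with h' | h' <;>
        · have := Nat.le_of_dvd (by norm_num) h'
          omega
    exact fun c => (Finset.sum_eq_zero_iff_of_nonneg hnonneg).1 hquad c (mem_univ c)
  refine exists_isLoopedPath (componentVerts_nonempty c) (hsum c) ?_
  have := hquad0 c
  rw [hexp] at this
  linarith

lemma card_connectedComponent_eq_one {n : ℕ} (hn : 4 ≤ n)
    (h : ∀ j, indepCount G j = indepCount (cycleGraph n) j)
    (hc : ∀ c : G.ConnectedComponent, ∃ m i u, IsLoopedPath G (componentVerts c) m i u) :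
    Fintype.card G.ConnectedComponent = 1 := by
  have hev : aeval (-1 / 4 : ℚ) (indepPoly G univ) =
      2 ^ Fintype.card G.ConnectedComponent * (1 / 2) ^ n := by
    have hone : ∀ c : G.ConnectedComponent,
        aeval (-1 / 4 : ℚ) (indepPoly G (componentVerts c)) =
          2 * (1 / 2) ^ #(componentVerts c) := fun c => by
      obtain ⟨m, i, u, hu⟩ := hc c
      exact hu.aeval_indepPoly
    have hcard : ∑ c : G.ConnectedComponent, #(componentVerts c) = n := by
      have := sum_componentVerts G fun _ => (1 : ℕ)
      simp only [Finset.sum_const, smul_eq_mul, mul_one, card_univ] at this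
      rw [this, (global_sums hn h).1]
    rw [indepPoly_univ_eq_prod, map_prod, Finset.prod_congr rfl fun c _ => hone c,
      Finset.prod_mul_distrib, Finset.prod_pow_eq_pow_sum, hcard, Finset.prod_const, card_univ]
  obtain ⟨u, hu⟩ := isLoopedPath_cycleGraph (show 3 ≤ n by omega)
  rw [indepPoly_eq_of_indepCount h, hu.aeval_indepPoly, card_univ, Fintype.card_fin] at hev
  have hpow : (2 : ℚ) ^ 1 = 2 ^ Fintype.card G.ConnectedComponent := by
    rw [pow_one]
    exact mul_right_cancel₀ (pow_ne_zero n (by norm_num)) hev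
  exact (pow_right_injective₀ (by norm_num) (by norm_num) hpow).symm

end PrimePower

lemma IsLoopedPath.nonempty_iso [Fintype V] {G : SimpleGraph V} {n i : ℕ} {u : ℕ → V}
    (h : IsLoopedPath G univ n i u) :
    Nonempty (G ≃g cycleGraph n) ∨ Nonempty (G ≃g dGraph n) := by
  have hn := h.three_le
  have hsurj : ∀ x, ∃ a < n, u a = x := fun x => by
    have := mem_univ x
    rw [h.eq_image, mem_image] at this
    simpa using this
  rcases h.loop with rfl | hi
  · left
    let e : Fin n ≃ V := Equiv.ofBijective (fun a => u a)
      ⟨fun a b hab => Fin.ext (h.inj a a.isLt b b.isLt hab), fun x => by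
        obtain ⟨a, ha, rfl⟩ := hsurj x
        exact ⟨⟨a, ha⟩, rfl⟩⟩
    refine ⟨(RelIso.symm ⟨e, fun {a b} => ?_⟩ : G ≃g cycleGraph n)⟩
    change G.Adj (u a) (u b) ↔ _
    rw [h.adj_iff a a.isLt b b.isLt, cycleGraph_adj_iff (by omega), LoopRel]
    omega
  · right
    let e : Fin n ≃ V := Equiv.ofBijective (fun a => u (n - 1 - a))
      ⟨fun a b hab => Fin.ext (by
        have := h.inj (n - 1 - a) (by omega) (n - 1 - b) (by omega) hab
        omega), fun x => by
        obtain ⟨a, ha, rfl⟩ := hsurj x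
        exact ⟨⟨n - 1 - a, by omega⟩, congrArg u (by simp only; omega)⟩⟩
    refine ⟨(RelIso.symm ⟨e, fun {a b} => ?_⟩ : G ≃g dGraph n)⟩
    change G.Adj (u (n - 1 - a)) (u (n - 1 - b)) ↔ _
    rw [h.adj_iff (n - 1 - a) (by omega) (n - 1 - b) (by omega), LoopRel, dGraph,
      fromRel_adj, ne_eq, Fin.ext_iff]
    omega

end

theorem indepEquiv_primePowerCycle {V : Type*} [Fintype V] (G : SimpleGraph V) (p k : ℕ)
    (hp : p.Prime) (hp5 : 5 ≤ p) (hk : 1 ≤ k)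
    (h : ∀ j, indepCount G j = indepCount (SimpleGraph.cycleGraph (p ^ k)) j) :
    Nonempty (G ≃g SimpleGraph.cycleGraph (p ^ k)) ∨ Nonempty (G ≃g dGraph (p ^ k)) := by
  classical
  have hn : 4 ≤ p ^ k := by
    have := Nat.le_self_pow (by omega : k ≠ 0) p
    omega
  have hc := component_isLoopedPath hp hp5 hn h
  have hone := card_connectedComponent_eq_one hn h hc
  obtain ⟨c, hc1⟩ := Fintype.card_eq_one_iff.1 hone
  have huniv : componentVerts c = univ :=
    eq_univ_iff_forall.2 fun v => mem_componentVerts.2 (hc1 _)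
  obtain ⟨m, i, u, hu⟩ := hc c
  rw [huniv] at hu
  have hm : m = p ^ k := by
    rw [← hu.card_eq, card_univ, (global_sums hn h).1]
  rw [← hm]
  exact hu.nonempty_iso
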